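/- Let E, F, H ⊂ ℝ² be compact sets with dim_H(E) + dim_H(F) + dim_H(H) > 4. Then the set E·(F+H) = { x·(y+z) : x ∈ E, y ∈ F, z ∈ H } ⊂ ℝ has positive one-dimensional Lebesgue measure. -/

import Mathlib

open MeasureTheory Metric
open scoped ENNReal RealInnerProductSpace

/-!
Let `μ, ν, κ` be Frostman measures on `E, F, H` with exponents `a + b + d > 2n`, and let `τ` be
the image of `μ × (ν ∗ κ)` under the inner product. Then `τ̂(t) = ∫ ν̂(tx) κ̂(tx) dμ(x)`, so by
Cauchy–Schwarz `|τ̂(t)|² ≤ ∫ |ν̂(tx)|² dμ(x) · ∫ |κ̂(tx)|² dμ(x)`. The second factor is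
`O(|t| ^ (n - a - d))`: since `κ` has compact support, `κ̂` is essentially constant at unit scale.
Averaging the first factor over a dyadic shell `|t| ∼ R` replaces `μ` by its radial spread. When
`μ` lives away from the origin this spread has Frostman exponent `1`, and the same estimate gives
`O(R ^ (n - 1 - b))`. The shell therefore contributes `O(R ^ (2n - a - b - d))` to `∫ |τ̂|²`, which
is summable over dyadic `R`; hence `τ` is absolutely continuous and its support has positive length.
-/

theorem sq_lintegral_mul_le {X : Type*} [MeasurableSpace X] {μ : Measure X} {f g : X → ℝ≥0∞}
    (hf : AEMeasurable f μ) (hg : AEMeasurable g μ) :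
    (∫⁻ x, f x * g x ∂μ) ^ 2 ≤ (∫⁻ x, f x ^ 2 ∂μ) * ∫⁻ x, g x ^ 2 ∂μ := by
  have h := ENNReal.lintegral_mul_le_Lp_mul_Lq μ Real.HolderConjugate.two_two hf hg
  calc (∫⁻ x, f x * g x ∂μ) ^ 2
      ≤ ((∫⁻ x, f x ^ (2 : ℝ) ∂μ) ^ (1 / 2 : ℝ) * (∫⁻ x, g x ^ (2 : ℝ) ∂μ) ^ (1 / 2 : ℝ)) ^ 2 := by
        gcongr
        simpa using h
    _ = (∫⁻ x, f x ^ 2 ∂μ) * ∫⁻ x, g x ^ 2 ∂μ := by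
        rw [mul_pow, ← ENNReal.rpow_natCast, ← ENNReal.rpow_natCast, ← ENNReal.rpow_mul,
          ← ENNReal.rpow_mul]
        norm_num

theorem lintegral_neg_log_rpow_lt_top {q : ℝ} (hq : 0 ≤ q) :
    ∫⁻ t in Set.Ioo (0 : ℝ) 1, ENNReal.ofReal ((-Real.log t) ^ q) < ∞ := by
  set ε : ℝ := (q + 1)⁻¹
  have hε : 0 < ε := by positivity
  have hbound : ∀ t ∈ Set.Ioo (0 : ℝ) 1, (-Real.log t) ^ q ≤ (1 / ε) ^ q * t ^ (-(ε * q)) := by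
    intro t ht
    have hlog : -Real.log t ≤ 1 / ε * t ^ (-ε) := by
      rw [Real.rpow_neg ht.1.le, ← div_eq_mul_inv, le_div_iff₀ (by have := ht.1; positivity),
        neg_mul]
      exact (neg_le_abs _).trans (Real.abs_log_mul_self_rpow_lt t ε ht.1 ht.2.le hε).le
    calc (-Real.log t) ^ q ≤ (1 / ε * t ^ (-ε)) ^ q :=
          Real.rpow_le_rpow (neg_nonneg.2 (Real.log_nonpos ht.1.le ht.2.le)) hlog hq
      _ = (1 / ε) ^ q * t ^ (-(ε * q)) := by
          rw [Real.mul_rpow (by positivity) (Real.rpow_nonneg ht.1.le _), ← Real.rpow_mul ht.1.le,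
            neg_mul]
  have hexp : -1 < -(ε * q) := by
    rw [neg_lt_neg_iff, inv_mul_lt_one₀ (by positivity)]
    linarith
  have hintegrable : IntegrableOn (fun t : ℝ => (1 / ε) ^ q * t ^ (-(ε * q))) (Set.Ioo 0 1) :=
    ((intervalIntegral.integrableOn_Ioo_rpow_iff one_pos).2 hexp).const_mul _
  calc _ ≤ ∫⁻ t in Set.Ioo (0 : ℝ) 1, ENNReal.ofReal ((1 / ε) ^ q * t ^ (-(ε * q))) :=
        setLIntegral_mono' measurableSet_Ioo fun t ht => ENNReal.ofReal_le_ofReal (hbound t ht)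
    _ < ∞ := hintegrable.lintegral_lt_top

theorem lintegral_exp_neg_le {X : Type*} [MeasurableSpace X] {μ : Measure X} {u : X → ℝ}
    (hu : Measurable u) (hu0 : ∀ x, 0 ≤ u x) {C : ℝ≥0∞} {q : ℝ}
    (hμ : ∀ r, 0 < r → μ {x | u x < r} ≤ C * ENNReal.ofReal (r ^ q)) :
    ∫⁻ x, ENNReal.ofReal (Real.exp (-u x)) ∂μ ≤
      C * ∫⁻ t in Set.Ioo (0 : ℝ) 1, ENNReal.ofReal ((-Real.log t) ^ q) := by
  have hlevel : ∀ t ∈ Set.Ioi (0 : ℝ), μ {x | t < Real.exp (-u x)} ≤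
      (Set.Ioo (0 : ℝ) 1).indicator (fun t => C * ENNReal.ofReal ((-Real.log t) ^ q)) t := by
    intro t (ht : 0 < t)
    by_cases ht1 : t < 1
    · rw [Set.indicator_of_mem (Set.mem_Ioo.2 ⟨ht, ht1⟩)]
      convert hμ (-Real.log t) (neg_pos.2 (Real.log_neg ht ht1)) using 3
      ext x
      exact (Real.log_lt_iff_lt_exp ht).symm.trans lt_neg
    · have hempty : {x | t < Real.exp (-u x)} = ∅ := Set.eq_empty_of_forall_notMem fun x hx =>
        ht1 (hx.trans_le (Real.exp_le_one_iff.2 (neg_nonpos.2 (hu0 x))))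
      simp [hempty]
  calc ∫⁻ x, ENNReal.ofReal (Real.exp (-u x)) ∂μ
      = ∫⁻ t in Set.Ioi (0 : ℝ), μ {x | t < Real.exp (-u x)} :=
        lintegral_eq_lintegral_meas_lt μ (Filter.Eventually.of_forall fun x => Real.exp_nonneg _)
          hu.neg.exp.aemeasurable
    _ ≤ ∫⁻ t in Set.Ioi (0 : ℝ), (Set.Ioo (0 : ℝ) 1).indicator
          (fun t => C * ENNReal.ofReal ((-Real.log t) ^ q)) t :=
        setLIntegral_mono' measurableSet_Ioi hlevel
    _ = C * ∫⁻ t in Set.Ioo (0 : ℝ) 1, ENNReal.ofReal ((-Real.log t) ^ q) := by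
        rw [setLIntegral_indicator measurableSet_Ioo,
          Set.inter_eq_left.2 Set.Ioo_subset_Ioi_self,
          lintegral_const_mul _ (by fun_prop)]

section Frostman

variable {X : Type*} [PseudoMetricSpace X] [MeasurableSpace X] {μ ν : Measure X} {s : ℝ}

/-- The **Frostman condition** of exponent `s`: balls of radius `r` have measure `O(r ^ s)`. -/
def IsFrostman (μ : Measure X) (s : ℝ) : Prop :=
  ∃ C ≠ ∞, ∀ x r, 0 < r → μ (ball x r) ≤ C * ENNReal.ofReal (r ^ s)

theorem IsFrostman.of_le_smul (hμ : IsFrostman μ s) {c : ℝ≥0∞} (hc : c ≠ ∞) (h : ν ≤ c • μ) :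
    IsFrostman ν s := by
  obtain ⟨C, hC, hμ⟩ := hμ
  refine ⟨c * C, ENNReal.mul_ne_top hc hC, fun x r hr => (h _).trans ?_⟩
  rw [Measure.smul_apply, smul_eq_mul, mul_assoc]
  gcongr
  exact hμ x r hr

theorem IsFrostman.of_forall_le [IsFiniteMeasure μ] (hs : 0 ≤ s) {C : ℝ≥0∞} (hC : C ≠ ∞) {r₀ : ℝ}
    (hr₀ : 0 < r₀) (h : ∀ x r, 0 < r → r ≤ r₀ → μ (ball x r) ≤ C * ENNReal.ofReal (r ^ s)) :
    IsFrostman μ s := by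
  refine ⟨max C (μ Set.univ * ENNReal.ofReal (r₀ ^ (-s))),
    (max_lt hC.lt_top (ENNReal.mul_lt_top (measure_lt_top _ _) ENNReal.ofReal_lt_top)).ne,
    fun x r hr => ?_⟩
  rcases le_total r r₀ with hle | hle
  · exact (h x r hr hle).trans (by gcongr; exact le_max_left _ _)
  · have hone : 1 ≤ ENNReal.ofReal (r₀ ^ (-s)) * ENNReal.ofReal (r ^ s) := by
      rw [← ENNReal.ofReal_mul (by positivity), ENNReal.one_le_ofReal, Real.rpow_neg hr₀.le,
        ← div_eq_inv_mul, one_le_div₀ (by positivity)]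
      gcongr
    calc μ (ball x r) ≤ μ Set.univ * (ENNReal.ofReal (r₀ ^ (-s)) * ENNReal.ofReal (r ^ s)) :=
          (measure_mono (Set.subset_univ _)).trans (le_mul_of_one_le_right' hone)
      _ ≤ _ := by
          rw [← mul_assoc]
          gcongr
          exact le_max_right _ _

theorem IsFrostman.of_forall_ball_half_pow_le [IsFiniteMeasure μ] (hs : 0 ≤ s) {C : ℝ≥0∞}
    (hC : C ≠ ∞) {m : ℕ} (h : ∀ l, m ≤ l → ∀ x,
      μ (ball x ((1 / 2) ^ l)) ≤ C * ENNReal.ofReal (((1 / 2) ^ l) ^ s)) :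
    IsFrostman μ s := by
  refine .of_forall_le hs (ENNReal.mul_ne_top hC (ENNReal.ofReal_ne_top (r := 2 ^ s)))
    (by positivity : (0 : ℝ) < (1 / 2) ^ m) fun x r hr hrm => ?_
  obtain ⟨l, hlr, hrl⟩ := exists_nat_pow_near_of_lt_one hr
    (hrm.trans (pow_le_one₀ (by norm_num) (by norm_num))) (by norm_num : (0 : ℝ) < 1 / 2)
    (by norm_num)
  have hml : m ≤ l := Nat.lt_succ_iff.1
    ((pow_lt_pow_iff_right_of_lt_one₀ (by norm_num) (by norm_num)).1 (hlr.trans_le hrm))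
  calc μ (ball x r) ≤ μ (ball x ((1 / 2) ^ l)) := measure_mono (ball_subset_ball hrl)
    _ ≤ C * ENNReal.ofReal (((1 / 2) ^ l) ^ s) := h l hml x
    _ ≤ C * ENNReal.ofReal ((2 * r) ^ s) := by
        gcongr
        rw [pow_succ] at hlr
        linarith
    _ = C * ENNReal.ofReal (2 ^ s) * ENNReal.ofReal (r ^ s) := by
        rw [mul_assoc, ← ENNReal.ofReal_mul (by positivity), Real.mul_rpow zero_le_two hr.le]

theorem IsFrostman.exists_lintegral_exp_neg_mul_sq_dist_le [OpensMeasurableSpace X]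
    (hμ : IsFrostman μ s) (hs : 0 ≤ s) :
    ∃ C ≠ ∞, ∀ b : ℝ, 0 < b → ∀ x, ∫⁻ y, ENNReal.ofReal (Real.exp (-(b * dist y x ^ 2))) ∂μ ≤
      C * ENNReal.ofReal (b ^ (-(s / 2))) := by
  obtain ⟨C, hC, hμ⟩ := hμ
  set M := ∫⁻ t in Set.Ioo (0 : ℝ) 1, ENNReal.ofReal ((-Real.log t) ^ (s / 2))
  have hM : M < ∞ := lintegral_neg_log_rpow_lt_top (by positivity)
  refine ⟨C * M, ENNReal.mul_ne_top hC hM.ne, fun b hb x => ?_⟩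
  rw [mul_right_comm]
  refine lintegral_exp_neg_le (by fun_prop) (fun y => by positivity) fun r hr => ?_
  have hball : {y | b * dist y x ^ 2 < r} = ball x (√(r / b)) := by
    ext y
    rw [Set.mem_ofPred_eq, mem_ball, Real.lt_sqrt dist_nonneg, lt_div_iff₀' hb]
  rw [hball, mul_assoc, ← ENNReal.ofReal_mul (by positivity)]
  refine (hμ x _ (by positivity)).trans_eq ?_
  rw [Real.sqrt_eq_rpow, ← Real.rpow_mul (by positivity), Real.div_rpow hr.le hb.le,
    Real.rpow_neg hb.le, one_div_mul_eq_div, div_eq_inv_mul]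

end Frostman

section Tilt

variable {V : Type*} [NormedAddCommGroup V] [MeasurableSpace V]

/-- The measure with density `exp (‖y‖ ^ 2 / 4)` with respect to `ν`. Since the Fourier transform
of `exp (-‖w‖ ^ 2)` is a multiple of `exp (-‖y‖ ^ 2 / 4)`, the Fourier transform of `ν` is an
average at unit scale of the one of `gaussianTilt ν`. -/
noncomputable def gaussianTilt (ν : Measure V) : Measure V :=
  ν.withDensity fun y => ENNReal.ofReal (Real.exp (4⁻¹ * ‖y‖ ^ 2))

theorem gaussianTilt_le {ν : Measure V} {ρ : ℝ} (hν : ∀ᵐ y ∂ν, ‖y‖ ≤ ρ) :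
    gaussianTilt ν ≤ ENNReal.ofReal (Real.exp (4⁻¹ * ρ ^ 2)) • ν := by
  rw [gaussianTilt, ← withDensity_const]
  refine withDensity_mono ?_
  filter_upwards [hν] with y hy
  gcongr

theorem isFiniteMeasure_gaussianTilt {ν : Measure V} [IsFiniteMeasure ν] {ρ : ℝ}
    (hν : ∀ᵐ y ∂ν, ‖y‖ ≤ ρ) : IsFiniteMeasure (gaussianTilt ν) :=
  have := ν.smul_finite (ENNReal.ofReal_ne_top (r := Real.exp (4⁻¹ * ρ ^ 2)))
  isFiniteMeasure_of_le _ (gaussianTilt_le hν)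

end Tilt

section Gaussian

variable {V : Type*} [NormedAddCommGroup V] [InnerProductSpace ℝ V] [FiniteDimensional ℝ V]
  [MeasurableSpace V] [BorelSpace V]

theorem integrable_exp_neg_mul_sq_norm {b : ℝ} (hb : 0 < b) :
    Integrable (fun v : V => Real.exp (-(b * ‖v‖ ^ 2))) := by
  refine (GaussianFourier.integrable_cexp_neg_mul_sq_norm_add (b := (b : ℂ))
    (by simpa using hb) 0 (0 : V)).norm.congr (Filter.Eventually.of_forall fun v => ?_)
  simp [Complex.norm_exp, ← Complex.ofReal_pow, ← Complex.ofReal_mul]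

variable (V) in
/-- The unnormalised Gaussian measure with density `exp (-b ‖v‖ ^ 2)`. -/
noncomputable def gaussianWeight (b : ℝ) : Measure V :=
  volume.withDensity fun v => ENNReal.ofReal (Real.exp (-(b * ‖v‖ ^ 2)))

theorem isFiniteMeasure_gaussianWeight {b : ℝ} (hb : 0 < b) :
    IsFiniteMeasure (gaussianWeight V b) :=
  isFiniteMeasure_withDensity_ofReal (integrable_exp_neg_mul_sq_norm hb).2

theorem lintegral_gaussianWeight (b : ℝ) {f : V → ℝ≥0∞} (hf : Measurable f) :
    ∫⁻ v, f v ∂gaussianWeight V b = ∫⁻ v, ENNReal.ofReal (Real.exp (-(b * ‖v‖ ^ 2))) * f v :=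
  lintegral_withDensity_eq_lintegral_mul _ (by fun_prop) hf

theorem charFun_gaussianWeight {b : ℝ} (hb : 0 < b) (y : V) :
    charFun (gaussianWeight V b) y =
      ((Real.pi / b) ^ (Module.finrank ℝ V / 2 : ℝ) * Real.exp (-((4 * b)⁻¹ * ‖y‖ ^ 2)) : ℝ) := by
  have h := GaussianFourier.integral_cexp_neg_mul_sq_norm_add (b := (b : ℂ))
    (by simpa using hb) Complex.I y
  rw [charFun_apply, gaussianWeight,
    integral_withDensity_eq_integral_toReal_smul (by fun_prop) (by simp)]
  refine Eq.trans (integral_congr_ae (Filter.Eventually.of_forall fun v => ?_)) (h.trans ?_)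
  · simp only [ENNReal.toReal_ofReal (Real.exp_nonneg _), Complex.real_smul, Complex.ofReal_exp]
    rw [← Complex.exp_add, real_inner_comm]
    push_cast
    ring_nf
  · push_cast
    rw [Complex.ofReal_cpow (by positivity), Complex.I_sq]
    push_cast
    ring_nf

theorem measureReal_gaussianWeight_univ {b : ℝ} (hb : 0 < b) :
    (gaussianWeight V b).real Set.univ = (Real.pi / b) ^ (Module.finrank ℝ V / 2 : ℝ) := by
  have h := charFun_gaussianWeight (V := V) hb 0
  rw [charFun_zero] at h
  simpa using Complex.ofReal_injective h

theorem charFun_gaussianWeight_eq_measureReal_mul {b : ℝ} (hb : 0 < b) (y : V) :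
    charFun (gaussianWeight V b) y =
      ((gaussianWeight V b).real Set.univ * Real.exp (-((4 * b)⁻¹ * ‖y‖ ^ 2)) : ℝ) := by
  rw [charFun_gaussianWeight hb, measureReal_gaussianWeight_univ hb]

theorem integral_charFun_add {μ γ : Measure V} [IsFiniteMeasure μ] [IsFiniteMeasure γ] (ξ : V) :
    ∫ w, charFun μ (ξ + w) ∂γ = ∫ y, Complex.exp (⟪y, ξ⟫ * Complex.I) * charFun γ y ∂μ := by
  have hintegrable : Integrable (fun p : V × V => Complex.exp (⟪p.2, ξ + p.1⟫ * Complex.I))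
      (γ.prod μ) :=
    Integrable.of_bound (C := 1) (Continuous.aestronglyMeasurable (by fun_prop))
      (Filter.Eventually.of_forall fun p => by simp [Complex.norm_exp])
  simp only [charFun_apply]
  rw [integral_integral_swap hintegrable]
  refine integral_congr_ae (Filter.Eventually.of_forall fun y => ?_)
  simp only [← integral_const_mul, ← Complex.exp_add, inner_add_right, real_inner_comm y,
    Complex.ofReal_add, add_mul]

theorem charFun_map_neg_conv (μ : Measure V) [IsFiniteMeasure μ] (t : V) :
    charFun (Measure.conv (μ.map fun x => (-1 : ℝ) • x) μ) t = ((‖charFun μ t‖ ^ 2 : ℝ) : ℂ) := by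
  rw [charFun_conv, charFun_map_smul, neg_one_smul, charFun_neg,
    ← Complex.normSq_eq_conj_mul_self, Complex.normSq_eq_norm_sq]

theorem lintegral_sq_charFun_gaussianWeight {μ : Measure V} [IsFiniteMeasure μ] {b : ℝ}
    (hb : 0 < b) :
    ∫⁻ t, ‖charFun μ t‖ₑ ^ 2 ∂gaussianWeight V b = gaussianWeight V b Set.univ *
      ∫⁻ x, ∫⁻ y, ENNReal.ofReal (Real.exp (-((4 * b)⁻¹ * dist y x ^ 2))) ∂μ ∂μ := by
  have := isFiniteMeasure_gaussianWeight (V := V) hb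
  set ρ : Measure V := μ.map fun x => (-1 : ℝ) • x
  have hswap := integral_charFun_add (μ := Measure.conv ρ μ) (γ := gaussianWeight V b) 0
  simp only [zero_add, ρ, charFun_map_neg_conv, charFun_gaussianWeight_eq_measureReal_mul hb,
    inner_zero_right, Complex.ofReal_zero, zero_mul, Complex.exp_zero, one_mul,
    integral_complex_ofReal, Complex.ofReal_inj, integral_const_mul] at hswap
  have hsq : Integrable (fun t => ‖charFun μ t‖ ^ 2) (gaussianWeight V b) :=
    Integrable.of_bound (C := μ.real Set.univ ^ 2)
      (measurable_charFun.norm.pow_const 2).aestronglyMeasurable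
      (Filter.Eventually.of_forall fun t => by
        rw [Real.norm_of_nonneg (by positivity)]
        exact pow_le_pow_left₀ (norm_nonneg _) (norm_charFun_le t) 2)
  have hexp : Integrable (fun y => Real.exp (-((4 * b)⁻¹ * ‖y‖ ^ 2))) (Measure.conv ρ μ) :=
    Integrable.of_bound (C := 1) (Continuous.aestronglyMeasurable (by fun_prop))
      (Filter.Eventually.of_forall fun y => by
        rw [Real.norm_of_nonneg (by positivity)]
        exact Real.exp_le_one_iff.2 (neg_nonpos.2 (by positivity)))
  calc ∫⁻ t, ‖charFun μ t‖ₑ ^ 2 ∂gaussianWeight V b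
      = ENNReal.ofReal (∫ t, ‖charFun μ t‖ ^ 2 ∂gaussianWeight V b) := by
        rw [ofReal_integral_eq_lintegral_ofReal hsq
          (Filter.Eventually.of_forall fun t => by positivity)]
        simp only [ENNReal.ofReal_pow (norm_nonneg _), ofReal_norm]
    _ = gaussianWeight V b Set.univ *
          ∫⁻ y, ENNReal.ofReal (Real.exp (-((4 * b)⁻¹ * ‖y‖ ^ 2))) ∂(Measure.conv ρ μ) := by
        rw [hswap, ENNReal.ofReal_mul measureReal_nonneg, ofReal_measureReal,
          ofReal_integral_eq_lintegral_ofReal hexp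
            (Filter.Eventually.of_forall fun t => by positivity)]
    _ = _ := by
        rw [Measure.lintegral_conv (by fun_prop), lintegral_map (by fun_prop) (by fun_prop)]
        simp only [dist_eq_norm, neg_one_smul, neg_add_eq_sub]

theorem IsFrostman.exists_lintegral_sq_charFun_gaussianWeight_le {μ : Measure V}
    [IsFiniteMeasure μ] {s : ℝ} (hμ : IsFrostman μ s) (hs : 0 ≤ s) :
    ∃ C ≠ ∞, ∀ b : ℝ, 0 < b → ∫⁻ t, ‖charFun μ t‖ₑ ^ 2 ∂gaussianWeight V b ≤
      C * ENNReal.ofReal (b ^ ((s - Module.finrank ℝ V) / 2)) := by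
  set n := (Module.finrank ℝ V : ℝ)
  obtain ⟨C, hC, h⟩ := hμ.exists_lintegral_exp_neg_mul_sq_dist_le hs
  refine ⟨ENNReal.ofReal (Real.pi ^ (n / 2) * 4 ^ (s / 2)) * (C * μ Set.univ),
    by finiteness, fun b hb => ?_⟩
  have := isFiniteMeasure_gaussianWeight (V := V) hb
  have hpow : (Real.pi / b) ^ (n / 2) * (4 * b)⁻¹ ^ (-(s / 2)) =
      Real.pi ^ (n / 2) * 4 ^ (s / 2) * b ^ ((s - n) / 2) := by
    rw [Real.div_rpow Real.pi_nonneg hb.le, Real.inv_rpow (by positivity), ← Real.rpow_neg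
      (by positivity), neg_neg, Real.mul_rpow (by positivity) hb.le, sub_div, Real.rpow_sub hb]
    ring
  calc ∫⁻ t, ‖charFun μ t‖ₑ ^ 2 ∂gaussianWeight V b
      ≤ gaussianWeight V b Set.univ *
          ∫⁻ _, C * ENNReal.ofReal ((4 * b)⁻¹ ^ (-(s / 2))) ∂μ := by
        rw [lintegral_sq_charFun_gaussianWeight hb]
        gcongr with x
        exact h _ (by positivity) x
    _ = ENNReal.ofReal ((Real.pi / b) ^ (n / 2) * (4 * b)⁻¹ ^ (-(s / 2))) * (C * μ Set.univ) := by
        rw [lintegral_const, ← ofReal_measureReal, measureReal_gaussianWeight_univ hb,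
          ENNReal.ofReal_mul (by positivity)]
        ring
    _ = _ := by
        rw [hpow, ENNReal.ofReal_mul (by positivity)]
        ring

theorem integral_charFun_gaussianTilt {ν : Measure V} [IsFiniteMeasure (gaussianTilt ν)] (ξ : V) :
    ∫ w, charFun (gaussianTilt ν) (ξ + w) ∂gaussianWeight V 1 =
      (gaussianWeight V 1).real Set.univ * charFun ν ξ := by
  have := isFiniteMeasure_gaussianWeight (V := V) one_pos
  rw [integral_charFun_add, charFun_apply, ← integral_const_mul]
  nth_rw 1 [gaussianTilt]
  rw [integral_withDensity_eq_integral_toReal_smul (by fun_prop) (by simp)]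
  refine integral_congr_ae (Filter.Eventually.of_forall fun y => ?_)
  have hcancel : (Real.exp (4⁻¹ * ‖y‖ ^ 2) : ℂ) * Real.exp (-(4⁻¹ * ‖y‖ ^ 2)) = 1 := by
    rw [← Complex.ofReal_mul, ← Real.exp_add, add_neg_cancel, Real.exp_zero, Complex.ofReal_one]
  simp only [charFun_gaussianWeight_eq_measureReal_mul one_pos, mul_one,
    ENNReal.toReal_ofReal (Real.exp_nonneg _), Complex.real_smul, Complex.ofReal_mul]
  linear_combination (Complex.exp (⟪y, ξ⟫ * Complex.I) *
    ((gaussianWeight V 1).real Set.univ : ℂ)) * hcancel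

theorem sq_enorm_charFun_le_lintegral_gaussianTilt {ν : Measure V}
    [IsFiniteMeasure (gaussianTilt ν)] (ξ : V) :
    ‖charFun ν ξ‖ₑ ^ 2 ≤ gaussianWeight V 1 Set.univ *
      ∫⁻ η, ENNReal.ofReal (Real.exp (-‖η - ξ‖ ^ 2)) * ‖charFun (gaussianTilt ν) η‖ₑ ^ 2 := by
  set φ : V → ℝ≥0∞ := fun η =>
    ENNReal.ofReal (Real.exp (-‖η - ξ‖ ^ 2)) * ‖charFun (gaussianTilt ν) η‖ₑ ^ 2
  have hmeas : Measurable fun w => ‖charFun (gaussianTilt ν) (ξ + w)‖ₑ :=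
    (measurable_charFun.comp (measurable_const_add ξ)).enorm
  have hmass : 1 ≤ ‖((gaussianWeight V 1).real Set.univ : ℂ)‖ₑ := by
    rw [measureReal_gaussianWeight_univ one_pos, ← ofReal_norm, Complex.norm_real,
      Real.norm_of_nonneg (by positivity), ENNReal.one_le_ofReal, div_one]
    exact Real.one_le_rpow (by linarith [Real.two_le_pi]) (by positivity)
  calc ‖charFun ν ξ‖ₑ ^ 2
      ≤ ‖∫ w, charFun (gaussianTilt ν) (ξ + w) ∂gaussianWeight V 1‖ₑ ^ 2 := by
        rw [integral_charFun_gaussianTilt, enorm_mul]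
        gcongr
        exact le_mul_of_one_le_left' hmass
    _ ≤ (∫⁻ w, 1 * ‖charFun (gaussianTilt ν) (ξ + w)‖ₑ ∂gaussianWeight V 1) ^ 2 := by
        simp only [one_mul]
        gcongr
        exact enorm_integral_le_lintegral_enorm _
    _ ≤ _ := sq_lintegral_mul_le aemeasurable_const hmeas.aemeasurable
    _ = gaussianWeight V 1 Set.univ * ∫⁻ w, φ (ξ + w) := by
        rw [lintegral_gaussianWeight _ (hmeas.pow_const 2)]
        simp [φ]
    _ = gaussianWeight V 1 Set.univ * ∫⁻ η, φ η := by rw [lintegral_add_left_eq_self]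

end Gaussian

section Averaging

variable {V : Type*} [NormedAddCommGroup V] [NormedSpace ℝ V]

theorem sq_dist_inv_smul {t : ℝ} (ht : t ≠ 0) (x η : V) :
    t ^ 2 * dist x (t⁻¹ • η) ^ 2 = ‖η - t • x‖ ^ 2 := by
  rw [← sq_abs t, ← mul_pow, ← Real.norm_eq_abs, ← dist_smul₀, smul_inv_smul₀ ht, dist_comm,
    dist_eq_norm]

theorem exp_neg_sq_norm_sub_smul_le {x η : V} {t ρ : ℝ} (ht : 1 ≤ |t|) (hx : ‖x‖ ≤ ρ) :
    Real.exp (-‖η - t • x‖ ^ 2) ≤ Real.exp (2⁻¹ * ρ ^ 2) *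
      (Real.exp (-((4 * t ^ 2)⁻¹ * ‖η‖ ^ 2)) *
        Real.exp (-(t ^ 2 / 2 * dist x (t⁻¹ • η) ^ 2))) := by
  have ht0 : t ≠ 0 := abs_pos.1 (one_pos.trans_le ht)
  have ht2 : 1 ≤ t ^ 2 := by rwa [one_le_sq_iff_one_le_abs]
  have hη : ‖η‖ ≤ ‖η - t • x‖ + |t| * ρ := by
    calc ‖η‖ = ‖(η - t • x) + t • x‖ := by rw [sub_add_cancel]
      _ ≤ ‖η - t • x‖ + ‖t • x‖ := norm_add_le _ _
      _ ≤ _ := by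
        rw [norm_smul, Real.norm_eq_abs]
        gcongr
  have hηsq : ‖η‖ ^ 2 ≤ 2 * (‖η - t • x‖ ^ 2 + t ^ 2 * ρ ^ 2) := by
    rw [← sq_abs t, ← mul_pow]
    exact (pow_le_pow_left₀ (norm_nonneg _) hη 2).trans add_sq_le
  have hdamp : (4 * t ^ 2)⁻¹ * ‖η‖ ^ 2 ≤ 2⁻¹ * (‖η - t • x‖ ^ 2 + ρ ^ 2) := by
    rw [inv_mul_le_iff₀ (by positivity)]
    linarith [le_mul_of_one_le_left (sq_nonneg ‖η - t • x‖) ht2]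
  rw [← Real.exp_add, ← Real.exp_add, div_mul_eq_mul_div, sq_dist_inv_smul ht0]
  exact Real.exp_le_exp.2 (by linarith)

theorem IsFrostman.exists_lintegral_exp_neg_sq_norm_sub_smul_le [MeasurableSpace V]
    [OpensMeasurableSpace V] {μ : Measure V} {s ρ : ℝ}
    (hμ : IsFrostman μ s) (hs : 0 ≤ s) (hμρ : ∀ᵐ x ∂μ, ‖x‖ ≤ ρ) :
    ∃ C ≠ ∞, ∀ t : ℝ, 1 ≤ |t| → ∀ η,
      ∫⁻ x, ENNReal.ofReal (Real.exp (-‖η - t • x‖ ^ 2)) ∂μ ≤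
        C * ENNReal.ofReal (|t| ^ (-s)) *
          ENNReal.ofReal (Real.exp (-((4 * t ^ 2)⁻¹ * ‖η‖ ^ 2))) := by
  obtain ⟨C, hC, h⟩ := hμ.exists_lintegral_exp_neg_mul_sq_dist_le hs
  refine ⟨ENNReal.ofReal (Real.exp (2⁻¹ * ρ ^ 2)) * C * ENNReal.ofReal (2 ^ (s / 2)),
    by finiteness, fun t ht η => ?_⟩
  have ht0 : t ≠ 0 := abs_pos.1 (one_pos.trans_le ht)
  have hpow : (t ^ 2 / 2) ^ (-(s / 2)) = 2 ^ (s / 2) * |t| ^ (-s) := by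
    rw [Real.div_rpow (by positivity) (by positivity), ← sq_abs, ← Real.rpow_natCast,
      ← Real.rpow_mul (abs_nonneg t), Real.rpow_neg two_pos.le, div_inv_eq_mul, mul_comm]
    congr 2
    push_cast
    ring
  calc ∫⁻ x, ENNReal.ofReal (Real.exp (-‖η - t • x‖ ^ 2)) ∂μ
      ≤ ∫⁻ x, ENNReal.ofReal (Real.exp (2⁻¹ * ρ ^ 2)) *
          (ENNReal.ofReal (Real.exp (-((4 * t ^ 2)⁻¹ * ‖η‖ ^ 2))) *
            ENNReal.ofReal (Real.exp (-(t ^ 2 / 2 * dist x (t⁻¹ • η) ^ 2)))) ∂μ := by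
        refine lintegral_mono_ae ?_
        filter_upwards [hμρ] with x hx
        rw [← ENNReal.ofReal_mul (by positivity), ← ENNReal.ofReal_mul (by positivity)]
        exact ENNReal.ofReal_le_ofReal (exp_neg_sq_norm_sub_smul_le ht hx)
    _ ≤ ENNReal.ofReal (Real.exp (2⁻¹ * ρ ^ 2)) *
          (ENNReal.ofReal (Real.exp (-((4 * t ^ 2)⁻¹ * ‖η‖ ^ 2))) *
            (C * ENNReal.ofReal ((t ^ 2 / 2) ^ (-(s / 2))))) := by
        rw [lintegral_const_mul' _ _ (by finiteness), lintegral_const_mul' _ _ (by finiteness)]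
        gcongr
        exact h _ (by positivity) _
    _ = _ := by
        rw [hpow, ENNReal.ofReal_mul (by positivity)]
        ring

end Averaging

section Fourier

variable {V : Type*} [NormedAddCommGroup V] [InnerProductSpace ℝ V] [FiniteDimensional ℝ V]
  [MeasurableSpace V] [BorelSpace V]

theorem lintegral_sq_charFun_smul_le {μ ν : Measure V} [SFinite μ]
    [IsFiniteMeasure (gaussianTilt ν)] {t b : ℝ} {C : ℝ≥0∞}
    (h : ∀ η, ∫⁻ x, ENNReal.ofReal (Real.exp (-‖η - t • x‖ ^ 2)) ∂μ ≤
      C * ENNReal.ofReal (Real.exp (-(b * ‖η‖ ^ 2)))) :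
    ∫⁻ x, ‖charFun ν (t • x)‖ₑ ^ 2 ∂μ ≤ gaussianWeight V 1 Set.univ *
      (C * ∫⁻ η, ‖charFun (gaussianTilt ν) η‖ₑ ^ 2 ∂gaussianWeight V b) := by
  set φ : V → ℝ≥0∞ := fun η => ‖charFun (gaussianTilt ν) η‖ₑ ^ 2
  have hφ : Measurable φ := measurable_charFun.enorm.pow_const 2
  have hker : Measurable (Function.uncurry fun x η : V =>
      ENNReal.ofReal (Real.exp (-‖η - t • x‖ ^ 2)) * φ η) :=
    Measurable.mul (by fun_prop) (hφ.comp measurable_snd)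
  calc ∫⁻ x, ‖charFun ν (t • x)‖ₑ ^ 2 ∂μ
      ≤ ∫⁻ x, gaussianWeight V 1 Set.univ *
          ∫⁻ η, ENNReal.ofReal (Real.exp (-‖η - t • x‖ ^ 2)) * φ η ∂volume ∂μ :=
        lintegral_mono fun x => sq_enorm_charFun_le_lintegral_gaussianTilt _
    _ = gaussianWeight V 1 Set.univ *
          ∫⁻ η, (∫⁻ x, ENNReal.ofReal (Real.exp (-‖η - t • x‖ ^ 2)) ∂μ) * φ η := by
        rw [lintegral_const_mul _ hker.lintegral_prod_right,
          lintegral_lintegral_swap hker.aemeasurable]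
        congr with η
        rw [lintegral_mul_const _ (by fun_prop)]
    _ ≤ gaussianWeight V 1 Set.univ *
          ∫⁻ η, C * ENNReal.ofReal (Real.exp (-(b * ‖η‖ ^ 2))) * φ η := by
        gcongr with η
        exact h η
    _ = _ := by
        simp only [mul_assoc]
        rw [lintegral_const_mul _ (by fun_prop), lintegral_gaussianWeight b hφ]

/-- The dilate of `μ` by `t` gives unit balls mass `O(|t| ^ (-a))`, and the Fourier transform of `ν`
is essentially constant on unit balls; so only the energy `O(|t| ^ (n - b))` of `ν` at frequencies
up to `|t|` enters. -/
theorem IsFrostman.exists_lintegral_sq_charFun_smul_le {μ ν : Measure V} [SFinite μ]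
    [IsFiniteMeasure ν] {a b ρ : ℝ} (hμ : IsFrostman μ a) (hν : IsFrostman ν b) (ha : 0 ≤ a)
    (hb : 0 ≤ b) (hμρ : ∀ᵐ x ∂μ, ‖x‖ ≤ ρ) (hνρ : ∀ᵐ x ∂ν, ‖x‖ ≤ ρ) :
    ∃ C ≠ ∞, ∀ t : ℝ, 1 ≤ |t| → ∫⁻ x, ‖charFun ν (t • x)‖ₑ ^ 2 ∂μ ≤
      C * ENNReal.ofReal (|t| ^ (Module.finrank ℝ V - a - b)) := by
  set n := (Module.finrank ℝ V : ℝ)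
  have := isFiniteMeasure_gaussianWeight (V := V) one_pos
  have := isFiniteMeasure_gaussianTilt hνρ
  obtain ⟨A, hA, hAle⟩ := hμ.exists_lintegral_exp_neg_sq_norm_sub_smul_le ha hμρ
  obtain ⟨B, hB, hBle⟩ := (hν.of_le_smul ENNReal.ofReal_ne_top
    (gaussianTilt_le hνρ)).exists_lintegral_sq_charFun_gaussianWeight_le hb
  refine ⟨gaussianWeight V 1 Set.univ * (A * B * ENNReal.ofReal (4 ^ ((n - b) / 2))),
    by finiteness, fun t ht => ?_⟩
  have ht0 : 0 < |t| := one_pos.trans_le ht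
  have hpow : |t| ^ (-a) * ((4 * t ^ 2)⁻¹) ^ ((b - n) / 2) =
      4 ^ ((n - b) / 2) * |t| ^ (n - a - b) := by
    rw [← sq_abs, Real.inv_rpow (by positivity), ← Real.rpow_neg (by positivity),
      Real.mul_rpow (by positivity) (by positivity), ← Real.rpow_natCast, ← Real.rpow_mul ht0.le,
      mul_left_comm, ← Real.rpow_add ht0]
    congr 2 <;> push_cast <;> ring
  calc ∫⁻ x, ‖charFun ν (t • x)‖ₑ ^ 2 ∂μ
      ≤ gaussianWeight V 1 Set.univ * (A * ENNReal.ofReal (|t| ^ (-a)) *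
          ∫⁻ η, ‖charFun (gaussianTilt ν) η‖ₑ ^ 2 ∂gaussianWeight V (4 * t ^ 2)⁻¹) :=
        lintegral_sq_charFun_smul_le (hAle t ht)
    _ ≤ gaussianWeight V 1 Set.univ * (A * ENNReal.ofReal (|t| ^ (-a)) *
          (B * ENNReal.ofReal (((4 * t ^ 2)⁻¹) ^ ((b - n) / 2)))) := by
        gcongr
        have := abs_pos.1 ht0
        exact hBle _ (by positivity)
    _ = gaussianWeight V 1 Set.univ *
          (A * B * ENNReal.ofReal (|t| ^ (-a) * ((4 * t ^ 2)⁻¹) ^ ((b - n) / 2))) := by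
        rw [ENNReal.ofReal_mul (by positivity)]
        ring
    _ = _ := by
        rw [hpow, ENNReal.ofReal_mul (by positivity)]
        ring

theorem charFun_map_inner_prod (μ σ : Measure V) [IsFiniteMeasure μ] [IsFiniteMeasure σ] (t : ℝ) :
    charFun ((μ.prod σ).map fun p => ⟪p.1, p.2⟫) t = ∫ x, charFun σ (t • x) ∂μ := by
  have hintegrable : Integrable (fun p : V × V => Complex.exp (t * ⟪p.1, p.2⟫ * Complex.I))
      (μ.prod σ) :=
    Integrable.of_bound (C := 1) (Continuous.aestronglyMeasurable (by fun_prop))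
      (Filter.Eventually.of_forall fun p => by
        rw [← Complex.ofReal_mul, Complex.norm_exp_ofReal_mul_I])
  rw [charFun_apply_real, integral_map (by fun_prop) (by fun_prop), integral_prod _ hintegrable]
  simp only [charFun_apply, real_inner_smul_right, real_inner_comm, Complex.ofReal_mul]

theorem sq_enorm_charFun_map_inner_conv_le (μ ν κ : Measure V)
    [IsFiniteMeasure μ] [IsFiniteMeasure ν] [IsFiniteMeasure κ] (t : ℝ) :
    ‖charFun ((μ.prod (Measure.conv ν κ)).map fun p => ⟪p.1, p.2⟫) t‖ₑ ^ 2 ≤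
      (∫⁻ x, ‖charFun ν (t • x)‖ₑ ^ 2 ∂μ) * ∫⁻ x, ‖charFun κ (t • x)‖ₑ ^ 2 ∂μ := by
  have hmeas (σ : Measure V) [IsFiniteMeasure σ] : AEMeasurable (fun x => ‖charFun σ (t • x)‖ₑ) μ :=
    (measurable_charFun.comp (measurable_const_smul t)).enorm.aemeasurable
  simp only [charFun_map_inner_prod, charFun_conv]
  calc ‖∫ x, charFun ν (t • x) * charFun κ (t • x) ∂μ‖ₑ ^ 2
      ≤ (∫⁻ x, ‖charFun ν (t • x)‖ₑ * ‖charFun κ (t • x)‖ₑ ∂μ) ^ 2 := by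
        gcongr
        simpa only [enorm_mul] using enorm_integral_le_lintegral_enorm
          (μ := μ) (fun x => charFun ν (t • x) * charFun κ (t • x))
    _ ≤ _ := sq_lintegral_mul_le (hmeas ν) (hmeas κ)

end Fourier

theorem volume_setOf_smul_mem_ball_le {V : Type*} [NormedAddCommGroup V] [NormedSpace ℝ V]
    {x : V} {c : ℝ} (hc : 0 < c) (hx : c ≤ ‖x‖) (v : V) (r : ℝ) :
    volume {t : ℝ | t • x ∈ ball v r} ≤ ENNReal.ofReal (2 / c * r) := by
  refine (Real.volume_le_diam _).trans (ediam_le fun t ht t' ht' => ?_)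
  rw [edist_dist]
  refine ENNReal.ofReal_le_ofReal ?_
  have hdist : dist t t' * ‖x‖ ≤ 2 * r := by
    rw [Real.dist_eq, ← Real.norm_eq_abs, ← norm_smul, sub_smul, ← dist_eq_norm, two_mul]
    exact (dist_triangle_right _ _ v).trans (add_le_add (mem_ball.1 ht).le (mem_ball.1 ht').le)
  rw [div_mul_eq_mul_div, le_div_iff₀ hc]
  exact (mul_le_mul_of_nonneg_left hx dist_nonneg).trans hdist

section RadialSpread

variable {V : Type*} [NormedAddCommGroup V] [NormedSpace ℝ V] [MeasurableSpace V]

/-- The image of `μ` under dilation by a random factor `t`, uniformly distributed over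
`1 ≤ |t| ≤ 2`. -/
noncomputable def radialSpread (μ : Measure V) : Measure V :=
  ((volume.restrict (abs ⁻¹' Set.Icc (1 : ℝ) 2)).prod μ).map fun p => p.1 • p.2

theorem measurableSet_abs_preimage_Icc (a b : ℝ) : MeasurableSet (abs ⁻¹' Set.Icc a b) :=
  measurable_norm measurableSet_Icc

instance isFiniteMeasure_restrict_abs_preimage_Icc (a b : ℝ) :
    IsFiniteMeasure (volume.restrict (abs ⁻¹' Set.Icc a b)) := by
  refine isFiniteMeasure_restrict.2 (measure_ne_top_of_subset ?_
    (measure_closedBall_lt_top (x := (0 : ℝ)) (r := b)).ne)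
  intro t ht
  simpa using ht.2

instance isFiniteMeasure_radialSpread (μ : Measure V) [IsFiniteMeasure μ] :
    IsFiniteMeasure (radialSpread μ) :=
  inferInstanceAs (IsFiniteMeasure (Measure.map _ _))

variable [BorelSpace V] [SecondCountableTopology V] {μ : Measure V}

theorem lintegral_radialSpread [SFinite μ] {f : V → ℝ≥0∞} (hf : Measurable f) :
    ∫⁻ y, f y ∂radialSpread μ = ∫⁻ t in abs ⁻¹' Set.Icc (1 : ℝ) 2, ∫⁻ x, f (t • x) ∂μ := by
  rw [radialSpread, lintegral_map hf (by fun_prop), lintegral_prod _ (by fun_prop)]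

theorem ae_radialSpread_norm_le {ρ : ℝ} (hμ : ∀ᵐ x ∂μ, ‖x‖ ≤ ρ) :
    ∀ᵐ y ∂radialSpread μ, ‖y‖ ≤ 2 * ρ := by
  rw [radialSpread, ae_map_iff (by fun_prop) (measurableSet_le measurable_norm measurable_const)]
  filter_upwards [Measure.quasiMeasurePreserving_fst.ae
    (ae_restrict_mem (measurableSet_abs_preimage_Icc 1 2)),
    Measure.quasiMeasurePreserving_snd.ae hμ] with p ht hx
  rw [norm_smul]
  exact mul_le_mul ht.2 hx (norm_nonneg _) two_pos.le

theorem isFrostman_radialSpread [IsFiniteMeasure μ] {c : ℝ} (hc : 0 < c)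
    (hμ : ∀ᵐ x ∂μ, c ≤ ‖x‖) : IsFrostman (radialSpread μ) 1 := by
  refine ⟨ENNReal.ofReal (2 / c) * μ Set.univ, by finiteness, fun v r _ => ?_⟩
  have hsmul : Measurable fun p : ℝ × V => p.1 • p.2 := by fun_prop
  calc radialSpread μ (ball v r)
      = ∫⁻ x, volume.restrict (abs ⁻¹' Set.Icc (1 : ℝ) 2) {t | t • x ∈ ball v r} ∂μ := by
        rw [radialSpread, Measure.map_apply hsmul measurableSet_ball,
          Measure.prod_apply_symm (hsmul measurableSet_ball)]
        rfl
    _ ≤ ∫⁻ _, ENNReal.ofReal (2 / c * r) ∂μ := by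
        refine lintegral_mono_ae ?_
        filter_upwards [hμ] with x hx
        exact (Measure.restrict_apply_le _ _).trans (volume_setOf_smul_mem_ball_le hc hx v r)
    _ = _ := by
        rw [lintegral_const, Real.rpow_one, ENNReal.ofReal_mul (by positivity)]
        ring

end RadialSpread

section Dyadic

theorem setLIntegral_abs_preimage_Icc {φ : ℝ → ℝ≥0∞} (hφ : Measurable φ) {R : ℝ} (hR : 0 < R) :
    ∫⁻ t in abs ⁻¹' Set.Icc R (2 * R), φ t =
      ENNReal.ofReal R * ∫⁻ t in abs ⁻¹' Set.Icc (1 : ℝ) 2, φ (R * t) := by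
  have hpre : (R * ·) ⁻¹' (abs ⁻¹' Set.Icc R (2 * R)) = abs ⁻¹' Set.Icc (1 : ℝ) 2 := by
    ext t
    simp only [Set.mem_preimage, Set.mem_Icc, abs_mul, abs_of_pos hR, le_mul_iff_one_le_right hR,
      mul_comm 2 R, mul_le_mul_iff_right₀ hR]
  nth_rw 1 [← Real.smul_map_volume_mul_left hR.ne']
  rw [Measure.restrict_smul, lintegral_smul_measure, abs_of_pos hR, smul_eq_mul,
    setLIntegral_map (measurableSet_abs_preimage_Icc _ _) hφ (measurable_const_mul R), hpre]

theorem lintegral_lt_top_of_setLIntegral_dyadic_le {φ : ℝ → ℝ≥0∞} (hφ : Measurable φ)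
    {B K : ℝ≥0∞} (hB : B ≠ ∞) (hK : K ≠ ∞) (hφB : ∀ t, φ t ≤ B) {q : ℝ} (hq : q < -1)
    (h : ∀ R : ℝ, 1 ≤ R → ∫⁻ t in abs ⁻¹' Set.Icc (1 : ℝ) 2, φ (R * t) ≤
      K * ENNReal.ofReal (R ^ q)) :
    ∫⁻ t, φ t < ∞ := by
  have hcover : (Set.univ : Set ℝ) ⊆ closedBall 0 1 ∪
      ⋃ j : ℕ, abs ⁻¹' Set.Icc (2 ^ j) (2 * 2 ^ j) := fun t _ => by
    rcases le_or_gt |t| 1 with ht | ht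
    · exact Or.inl (by simpa using ht)
    · obtain ⟨j, hj, hj'⟩ := exists_nat_pow_near ht.le one_lt_two
      exact Or.inr (Set.mem_iUnion.2 ⟨j, hj, by rw [← pow_succ']; exact hj'.le⟩)
  have hshell (j : ℕ) : ∫⁻ t in abs ⁻¹' Set.Icc ((2 : ℝ) ^ j) (2 * 2 ^ j), φ t ≤
      K * ENNReal.ofReal (2 ^ (q + 1)) ^ j := by
    calc _ ≤ ENNReal.ofReal (2 ^ j) * (K * ENNReal.ofReal ((2 ^ j) ^ q)) := by
          rw [setLIntegral_abs_preimage_Icc hφ (by positivity)]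
          gcongr
          exact h _ (one_le_pow₀ one_le_two)
      _ = _ := by
          rw [mul_left_comm, ← ENNReal.ofReal_mul (by positivity),
            ← ENNReal.ofReal_pow (by positivity), ← Real.rpow_pow_comm two_pos.le,
            ← mul_pow, mul_comm 2, ← Real.rpow_add_one two_ne_zero]
  have hratio : ENNReal.ofReal (2 ^ (q + 1)) < 1 :=
    ENNReal.ofReal_lt_one.2 (Real.rpow_lt_one_of_one_lt_of_neg one_lt_two (by linarith))
  calc ∫⁻ t, φ t
      ≤ ∫⁻ t in closedBall 0 1 ∪ ⋃ j : ℕ, abs ⁻¹' Set.Icc (2 ^ j) (2 * 2 ^ j), φ t := by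
        rw [← setLIntegral_univ φ]
        exact lintegral_mono_set hcover
    _ ≤ (∫⁻ t in closedBall 0 1, φ t) +
          ∑' j : ℕ, ∫⁻ t in abs ⁻¹' Set.Icc ((2 : ℝ) ^ j) (2 * 2 ^ j), φ t :=
        (lintegral_union_le _ _ _).trans (add_le_add_right (lintegral_iUnion_le _ _) _)
    _ ≤ B * volume (closedBall (0 : ℝ) 1) + K * (1 - ENNReal.ofReal (2 ^ (q + 1)))⁻¹ := by
        rw [← setLIntegral_const, ← ENNReal.tsum_geometric, ← ENNReal.tsum_mul_left]
        gcongr with t j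
        · exact hφB t
        · exact hshell j
    _ < ∞ := ENNReal.add_lt_top.2 ⟨ENNReal.mul_lt_top hB.lt_top measure_closedBall_lt_top,
        ENNReal.mul_lt_top hK.lt_top (ENNReal.inv_lt_top.2 (tsub_pos_of_lt hratio))⟩

end Dyadic

section InnerProduct

variable {V : Type*} [NormedAddCommGroup V] [InnerProductSpace ℝ V] [FiniteDimensional ℝ V]
  [MeasurableSpace V] [BorelSpace V]

theorem rpow_abs_mul_le {R t : ℝ} (hR : 0 < R) (ht : |t| ∈ Set.Icc (1 : ℝ) 2) (q : ℝ) :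
    |R * t| ^ q ≤ 2 ^ |q| * R ^ q := by
  have ht0 : 0 ≤ |t| := abs_nonneg t
  rw [abs_mul, abs_of_pos hR, Real.mul_rpow hR.le ht0, mul_comm]
  gcongr
  calc |t| ^ q ≤ |t| ^ |q| := Real.rpow_le_rpow_of_exponent_le ht.1 (le_abs_self q)
    _ ≤ 2 ^ |q| := Real.rpow_le_rpow ht0 ht.2 (abs_nonneg q)

theorem IsFrostman.exists_lintegral_lintegral_sq_charFun_smul_le {μ ν : Measure V}
    [IsFiniteMeasure μ] [IsFiniteMeasure ν] {b c ρ : ℝ} (hν : IsFrostman ν b) (hb : 0 ≤ b)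
    (hc : 0 < c) (hμc : ∀ᵐ x ∂μ, c ≤ ‖x‖) (hμρ : ∀ᵐ x ∂μ, ‖x‖ ≤ ρ) (hνρ : ∀ᵐ x ∂ν, ‖x‖ ≤ ρ) :
    ∃ C ≠ ∞, ∀ R : ℝ, 1 ≤ R →
      ∫⁻ t in abs ⁻¹' Set.Icc (1 : ℝ) 2, ∫⁻ x, ‖charFun ν ((R * t) • x)‖ₑ ^ 2 ∂μ ≤
        C * ENNReal.ofReal (R ^ (Module.finrank ℝ V - 1 - b)) := by
  obtain ⟨C, hC, h⟩ := (isFrostman_radialSpread hc hμc).exists_lintegral_sq_charFun_smul_le hν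
    zero_le_one hb (ρ := max ρ (2 * ρ))
    ((ae_radialSpread_norm_le hμρ).mono fun _ hx => hx.trans (le_max_right _ _))
    (hνρ.mono fun _ hx => hx.trans (le_max_left _ _))
  refine ⟨C, hC, fun R hR => ?_⟩
  have hmeas : Measurable fun y => ‖charFun ν (R • y)‖ₑ ^ 2 :=
    (measurable_charFun.comp (measurable_const_smul R)).enorm.pow_const 2
  have hR' : |R| = R := abs_of_pos (one_pos.trans_le hR)
  simpa only [lintegral_radialSpread hmeas, smul_smul, hR'] using h R (by rwa [hR'])

theorem IsFrostman.exists_lintegral_sq_charFun_mul_smul_le {μ ν : Measure V} [SFinite μ]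
    [IsFiniteMeasure ν] {a b ρ : ℝ} (hμ : IsFrostman μ a) (hν : IsFrostman ν b) (ha : 0 ≤ a)
    (hb : 0 ≤ b) (hμρ : ∀ᵐ x ∂μ, ‖x‖ ≤ ρ) (hνρ : ∀ᵐ x ∂ν, ‖x‖ ≤ ρ) :
    ∃ C ≠ ∞, ∀ R t : ℝ, 1 ≤ R → |t| ∈ Set.Icc (1 : ℝ) 2 →
      ∫⁻ x, ‖charFun ν ((R * t) • x)‖ₑ ^ 2 ∂μ ≤
        C * ENNReal.ofReal (R ^ (Module.finrank ℝ V - a - b)) := by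
  obtain ⟨C, hC, h⟩ := hμ.exists_lintegral_sq_charFun_smul_le hν ha hb hμρ hνρ
  refine ⟨C * ENNReal.ofReal (2 ^ |Module.finrank ℝ V - a - b|), by finiteness,
    fun R t hR ht => (h _ ?_).trans ?_⟩
  · rw [abs_mul]
    exact one_le_mul_of_one_le_of_one_le (hR.trans (le_abs_self R)) ht.1
  · rw [mul_assoc, ← ENNReal.ofReal_mul (by positivity)]
    gcongr
    exact rpow_abs_mul_le (one_pos.trans_le hR) ht _

theorem IsFrostman.lintegral_sq_charFun_map_inner_conv_lt_top {μ ν κ : Measure V}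
    [IsFiniteMeasure μ] [IsFiniteMeasure ν] [IsFiniteMeasure κ] {a b d c ρ : ℝ}
    (hμ : IsFrostman μ a) (hν : IsFrostman ν b) (hκ : IsFrostman κ d)
    (ha : 0 ≤ a) (hb : 0 ≤ b) (hd : 0 ≤ d) (hsum : 2 * Module.finrank ℝ V < a + b + d)
    (hc : 0 < c) (hμc : ∀ᵐ x ∂μ, c ≤ ‖x‖) (hμρ : ∀ᵐ x ∂μ, ‖x‖ ≤ ρ)
    (hνρ : ∀ᵐ x ∂ν, ‖x‖ ≤ ρ) (hκρ : ∀ᵐ x ∂κ, ‖x‖ ≤ ρ) :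
    ∫⁻ t, ‖charFun ((μ.prod (Measure.conv ν κ)).map fun p => ⟪p.1, p.2⟫) t‖ₑ ^ 2 < ∞ := by
  set n := (Module.finrank ℝ V : ℝ)
  set τ := (μ.prod (Measure.conv ν κ)).map fun p : V × V => ⟪p.1, p.2⟫
  obtain ⟨C, hC, hshell⟩ := hν.exists_lintegral_lintegral_sq_charFun_smul_le hb hc hμc hμρ hνρ
  obtain ⟨D, hD, hpoint⟩ := hμ.exists_lintegral_sq_charFun_mul_smul_le hκ ha hd hμρ hκρ
  have hbound (t : ℝ) : ‖charFun τ t‖ₑ ^ 2 ≤ ENNReal.ofReal (τ.real Set.univ) ^ 2 := by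
    rw [← ofReal_norm]
    gcongr
    exact norm_charFun_le t
  refine lintegral_lt_top_of_setLIntegral_dyadic_le (measurable_charFun.enorm.pow_const 2)
    (B := ENNReal.ofReal (τ.real Set.univ) ^ 2)
    (K := C * D) (by finiteness) (by finiteness) hbound
    (show (n - 1 - b) + (n - a - d) < -1 by linarith) fun R hR => ?_
  have hR0 : 0 < R := one_pos.trans_le hR
  calc ∫⁻ t in abs ⁻¹' Set.Icc (1 : ℝ) 2, ‖charFun τ (R * t)‖ₑ ^ 2
      ≤ ∫⁻ t in abs ⁻¹' Set.Icc (1 : ℝ) 2, (∫⁻ x, ‖charFun ν ((R * t) • x)‖ₑ ^ 2 ∂μ) *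
          (D * ENNReal.ofReal (R ^ (n - a - d))) := by
        refine setLIntegral_mono' (measurableSet_abs_preimage_Icc _ _) fun t ht => ?_
        refine (sq_enorm_charFun_map_inner_conv_le μ ν κ _).trans ?_
        gcongr
        exact hpoint R t hR ht
    _ ≤ C * ENNReal.ofReal (R ^ (n - 1 - b)) *
          (D * ENNReal.ofReal (R ^ (n - a - d))) := by
        rw [lintegral_mul_const' _ _ (by finiteness)]
        gcongr
        exact hshell R hR
    _ = _ := by
        rw [Real.rpow_add hR0, ENNReal.ofReal_mul (by positivity)]
        ring

end InnerProduct

section AbsolutelyContinuous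

open FourierTransform SchwartzMap
open scoped Manifold

variable {V : Type*} [NormedAddCommGroup V] [InnerProductSpace ℝ V] [FiniteDimensional ℝ V]

theorem exists_schwartzMap_indicator_le_le {K U : Set V} (hK : IsCompact K) (hU : IsOpen U)
    (hKU : K ⊆ U) :
    ∃ f : 𝓢(V, ℝ), (∀ x, K.indicator 1 x ≤ f x) ∧ ∀ x, f x ≤ U.indicator 1 x := by
  obtain ⟨L, hL, hKL, hLU⟩ := exists_compact_between hK hU hKU
  obtain ⟨f, hf, hrange, hsupp, hone⟩ := exists_contMDiff_support_eq_eq_one_iff (n := ⊤)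
    𝓘(ℝ, V) isOpen_interior hK.isClosed hKL
  have h01 x : f x ∈ Set.Icc 0 1 := hrange (Set.mem_range_self x)
  have hcompact : HasCompactSupport f :=
    HasCompactSupport.of_support_subset_isCompact hL (hsupp.trans_subset interior_subset)
  refine ⟨hcompact.toSchwartzMap hf.contDiff,
    Set.indicator_le' (fun x hx => ((hone x).1 hx).ge) fun x _ => (h01 x).1, fun x => ?_⟩
  by_cases hx : x ∈ U
  · simpa [hx] using (h01 x).2
  · have hx' : x ∉ Function.support f := hsupp ▸ fun h => hx (hLU (interior_subset h))
    simpa [hx] using (Function.notMem_support.1 hx').le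

variable [MeasurableSpace V] [BorelSpace V]

theorem integral_fourier_eq_integral_mul_charFun {ν : Measure V} [IsFiniteMeasure ν]
    (f : 𝓢(V, ℂ)) :
    ∫ x, 𝓕 f x ∂ν = ∫ v, f v * charFun ν (-(2 * Real.pi) • v) := by
  have h := VectorFourier.integral_fourierIntegral_smul_eq_flip (μ := volume) (ν := ν)
    (L := innerₗ V) (f := f) (g := fun _ => (1 : ℂ)) Real.continuous_fourierChar
    continuous_inner f.integrable (integrable_const 1)
  simp only [smul_eq_mul, mul_one, flip_innerₗ] at h
  refine h.trans (integral_congr_ae (Filter.Eventually.of_forall fun v => ?_))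
  simp only [charFun_eq_fourierIntegral', smul_smul]
  rw [neg_mul_neg, inv_mul_cancel₀ (by positivity), one_smul]
  rfl

theorem lintegral_sq_enorm_fourier (f : 𝓢(V, ℂ)) :
    ∫⁻ v, ‖𝓕 f v‖ₑ ^ 2 = ∫⁻ v, ‖f v‖ₑ ^ 2 := by
  have h (g : 𝓢(V, ℂ)) : ∫⁻ v, ‖g v‖ₑ ^ 2 = ENNReal.ofReal (∫ v, ‖g v‖ ^ 2) := by
    have hintegrable : Integrable (fun v => ‖g v‖ ^ 2) :=
      (memLp_two_iff_integrable_sq_norm g.continuous.aestronglyMeasurable).1 (g.memLp 2)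
    rw [ofReal_integral_eq_lintegral_ofReal hintegrable
      (Filter.Eventually.of_forall fun v => by positivity)]
    simp only [← ofReal_norm, ENNReal.ofReal_pow (norm_nonneg _)]
  rw [h, h, integral_norm_sq_fourier]

theorem sq_enorm_integral_schwartz_le {ν : Measure V} [IsFiniteMeasure ν] (f : 𝓢(V, ℂ)) :
    ‖∫ x, f x ∂ν‖ₑ ^ 2 ≤
      (∫⁻ v, ‖f v‖ₑ ^ 2) * ∫⁻ v, ‖charFun ν (-(2 * Real.pi) • v)‖ₑ ^ 2 := by
  set g : 𝓢(V, ℂ) := 𝓕⁻ f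
  have hg : 𝓕 g = f := fourier_fourierInv_eq f
  rw [← hg, lintegral_sq_enorm_fourier, integral_fourier_eq_integral_mul_charFun]
  calc ‖∫ v, g v * charFun ν (-(2 * Real.pi) • v)‖ₑ ^ 2
      ≤ (∫⁻ v, ‖g v‖ₑ * ‖charFun ν (-(2 * Real.pi) • v)‖ₑ) ^ 2 := by
        gcongr
        simpa only [enorm_mul] using enorm_integral_le_lintegral_enorm (μ := volume)
          (fun v => g v * charFun ν (-(2 * Real.pi) • v))
    _ ≤ _ := sq_lintegral_mul_le g.continuous.enorm.aemeasurable
        (measurable_charFun.comp (measurable_const_smul _)).enorm.aemeasurable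

theorem sq_measure_le_mul_of_isCompact {ν : Measure V} [IsFiniteMeasure ν] {K U : Set V}
    (hK : IsCompact K) (hU : IsOpen U) (hKU : K ⊆ U) :
    ν K ^ 2 ≤ volume U * ∫⁻ v, ‖charFun ν (-(2 * Real.pi) • v)‖ₑ ^ 2 := by
  obtain ⟨f, hKf, hfU⟩ := exists_schwartzMap_indicator_le_le hK hU hKU
  set φ : 𝓢(V, ℂ) := postcompCLM Complex.ofRealCLM f
  have hφ x : φ x = f x := rfl
  have hf0 x : 0 ≤ f x := (Set.indicator_nonneg (fun _ _ => zero_le_one) x).trans (hKf x)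
  have hlower : ν K ≤ ‖∫ x, φ x ∂ν‖ₑ := by
    simp only [hφ]
    rw [integral_complex_ofReal, ← ofReal_norm, Complex.norm_real,
      Real.norm_of_nonneg (integral_nonneg hf0),
      ofReal_integral_eq_lintegral_ofReal f.integrable (Filter.Eventually.of_forall hf0),
      ← lintegral_indicator_one hK.measurableSet]
    refine lintegral_mono fun x => ?_
    by_cases hx : x ∈ K
    · simpa [hx] using hKf x
    · simp [hx]
  have hupper : ∫⁻ v, ‖φ v‖ₑ ^ 2 ≤ volume U := by
    rw [← lintegral_indicator_one hU.measurableSet]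
    refine lintegral_mono fun x => ?_
    rw [hφ, ← ofReal_norm, Complex.norm_real, Real.norm_of_nonneg (hf0 x)]
    by_cases hx : x ∈ U
    · simpa [hx, pow_le_one_iff] using hfU x
    · simpa [hx] using hfU x
  calc ν K ^ 2 ≤ ‖∫ x, φ x ∂ν‖ₑ ^ 2 := by gcongr
    _ ≤ _ := sq_enorm_integral_schwartz_le φ
    _ ≤ _ := by gcongr

theorem absolutelyContinuous_of_lintegral_sq_charFun_lt_top {ν : Measure V} [IsFiniteMeasure ν]
    (h : ∫⁻ v, ‖charFun ν v‖ₑ ^ 2 < ∞) : ν ≪ volume := by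
  have hscale : ∫⁻ v, ‖charFun ν (-(2 * Real.pi) • v)‖ₑ ^ 2 < ∞ := by
    rw [← lintegral_map (f := fun v => ‖charFun ν v‖ₑ ^ 2) (by fun_prop)
      (measurable_const_smul _), Measure.map_addHaar_smul _ (by simp [Real.pi_ne_zero]),
      lintegral_smul_measure]
    exact ENNReal.mul_lt_top ENNReal.ofReal_lt_top h
  refine Measure.AbsolutelyContinuous.mk fun s hs hs0 => ?_
  simp only [hs.measure_eq_iSup_isCompact, ENNReal.iSup_eq_zero]
  intro K hKs hK
  by_contra hνK
  have hlt : volume K < ν K ^ 2 / ∫⁻ v, ‖charFun ν (-(2 * Real.pi) • v)‖ₑ ^ 2 := by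
    rw [measure_mono_null hKs hs0]
    exact ENNReal.div_pos (pow_ne_zero 2 hνK) hscale.ne
  obtain ⟨U, hKU, hU, hvolU⟩ := K.exists_isOpen_lt_of_lt _ hlt
  exact (ENNReal.mul_lt_of_lt_div hvolU).not_ge (sq_measure_le_mul_of_isCompact hK hU hKU)

end AbsolutelyContinuous

section Hausdorff

theorem exists_outerMeasure_le_ediam_rpow {X : Type*} [EMetricSpace X] [MeasurableSpace X]
    [BorelSpace X] {s : ℝ} {A : Set X} (hA : μH[s] A ≠ 0) :
    ∃ c : OuterMeasure X, c A ≠ 0 ∧ ∃ r > 0, ∀ B, ediam B ≤ r → c B ≤ ediam B ^ s := by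
  have hpre : μH[s] A =
      ⨆ n : ℕ, OuterMeasure.mkMetric'.pre (fun B : Set X => ediam B ^ s) (n : ℝ≥0∞)⁻¹ A := by
    rw [← OuterMeasure.iSup_apply, ← OuterMeasure.mkMetric'.eq_iSup_nat, Measure.hausdorffMeasure,
      ← Measure.coe_toOuterMeasure, Measure.mkMetric_toOuterMeasure]
    rfl
  obtain ⟨n, hn⟩ : ∃ n : ℕ,
      OuterMeasure.mkMetric'.pre (fun B : Set X => ediam B ^ s) (n : ℝ≥0∞)⁻¹ A ≠ 0 := by
    by_contra! h
    simp [hpre, h] at hA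
  exact ⟨_, hn, (n : ℝ≥0∞)⁻¹, by simp, fun B hB => OuterMeasure.mkMetric'.pre_le hB⟩

end Hausdorff

section Fibers

variable {X ι : Type*} [MeasurableSpace X] [MeasurableSpace ι]
  [MeasurableSingletonClass ι]

theorem exists_measure_le_forall_fiber_eq_min {q : X → ι} (hq : Measurable q) (ν : Measure X)
    [IsFiniteMeasure ν] (w : ℝ≥0∞) :
    ∃ ν' ≤ ν, ∀ a, ν' (q ⁻¹' {a}) = min w (ν (q ⁻¹' {a})) := by
  refine ⟨ν.withDensity fun x => min (w / ν (q ⁻¹' {q x})) 1, ?_, fun a => ?_⟩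
  · calc ν.withDensity (fun x => min (w / ν (q ⁻¹' {q x})) 1) ≤ ν.withDensity 1 :=
          withDensity_mono (Filter.Eventually.of_forall fun x => min_le_right _ _)
      _ = ν := withDensity_one
  · have hfiber : MeasurableSet (q ⁻¹' {a}) := hq (measurableSet_singleton a)
    have hconst : ∀ x ∈ q ⁻¹' {a},
        min (w / ν (q ⁻¹' {q x})) 1 = min (w / ν (q ⁻¹' {a})) 1 := by
      rintro x rfl
      rfl
    rw [withDensity_apply _ hfiber, setLIntegral_congr_fun hfiber hconst, setLIntegral_const]
    rcases eq_or_ne (ν (q ⁻¹' {a})) 0 with h0 | h0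
    · simp [h0]
    · rw [min_mul, one_mul, ENNReal.div_mul_cancel h0 (measure_ne_top _ _)]

variable [Countable ι]

theorem le_measure_preimage_of_le_fiber {q : X → ι} (hq : Measurable q) {c : OuterMeasure X}
    {ν : Measure X} (h : ∀ a, c (q ⁻¹' {a}) ≤ ν (q ⁻¹' {a})) (S : Set ι) :
    c (q ⁻¹' S) ≤ ν (q ⁻¹' S) :=
  calc c (q ⁻¹' S) = c (⋃ a : S, q ⁻¹' {(a : ι)}) := by
        rw [← Set.preimage_iUnion, Set.iUnion_of_singleton_coe]
    _ ≤ ∑' a : S, c (q ⁻¹' {(a : ι)}) := measure_iUnion_le _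
    _ ≤ ∑' a : S, ν (q ⁻¹' {(a : ι)}) := ENNReal.tsum_le_tsum fun a => h a
    _ = ν (q ⁻¹' S) :=
        tsum_measure_preimage_singleton S.to_countable fun a _ => hq (measurableSet_singleton a)

theorem exists_isFiniteMeasure_forall_fiber_eq {q : X → ι} (hq : Measurable q)
    (hfin : (Set.range q).Finite) {w : ℝ≥0∞} (hw : w ≠ ∞) :
    ∃ ν : Measure X, IsFiniteMeasure ν ∧ ∀ a ∈ Set.range q, ν (q ⁻¹' {a}) = w := by
  have : Finite (Set.range q) := hfin
  refine ⟨w • Measure.count.map (Set.rangeSplitting q), Measure.smul_finite _ hw, fun a ha => ?_⟩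
  have hsection : Set.rangeSplitting q ⁻¹' (q ⁻¹' {a}) = {⟨a, ha⟩} := by
    ext b
    simp [Set.apply_rangeSplitting, Subtype.ext_iff]
  rw [Measure.smul_apply, Measure.map_apply .of_discrete (hq (measurableSet_singleton a)),
    hsection, Measure.count_singleton, smul_eq_mul, mul_one]

/-- Frostman's construction: put mass `w` on every cell of the finest generation, then pass to
coarser generations one at a time, scaling the measure down on each cell that is too heavy. -/
theorem exists_isFiniteMeasure_le_fiber_le {q : ℕ → X → ι} {π : ι → ι}
    (hq : ∀ k, Measurable (q k)) (hπ : ∀ k x, q k x = π (q (k + 1) x))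
    (hfin : ∀ k, (Set.range (q k)).Finite) {c : OuterMeasure X} {w : ℕ → ℝ≥0∞}
    (hw : ∀ k, w k ≠ ∞) {m : ℕ} (hc : ∀ k, m ≤ k → ∀ a, c (q k ⁻¹' {a}) ≤ w k) (j : ℕ) :
    ∀ k, m ≤ k → ∃ ν : Measure X, IsFiniteMeasure ν ∧
      (∀ a, c (q k ⁻¹' {a}) ≤ ν (q k ⁻¹' {a})) ∧
      ∀ l ∈ Set.Icc k (k + j), ∀ a, ν (q l ⁻¹' {a}) ≤ w l := by
  induction j with
  | zero =>
    intro k hk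
    obtain ⟨ν, hνfin, hν⟩ := exists_isFiniteMeasure_forall_fiber_eq (hq k) (hfin k) (hw k)
    have hempty {a : ι} (ha : a ∉ Set.range (q k)) : q k ⁻¹' {a} = ∅ :=
      Set.preimage_singleton_eq_empty.2 ha
    refine ⟨ν, hνfin, fun a => ?_, fun l hl a => ?_⟩
    · by_cases ha : a ∈ Set.range (q k)
      · exact (hc k hk a).trans_eq (hν a ha).symm
      · simp [hempty ha]
    · obtain rfl : l = k := le_antisymm hl.2 hl.1
      by_cases ha : a ∈ Set.range (q l)
      · exact (hν a ha).le
      · simp [hempty ha]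
  | succ j ih =>
    intro k hk
    obtain ⟨ν, hνfin, hcν, hνw⟩ := ih (k + 1) (by omega)
    obtain ⟨ν', hν'ν, hν'⟩ := exists_measure_le_forall_fiber_eq_min (hq k) ν (w k)
    have hcoarse a : q k ⁻¹' {a} = q (k + 1) ⁻¹' (π ⁻¹' {a}) := by
      ext x
      simp [hπ k x]
    refine ⟨ν', isFiniteMeasure_of_le ν hν'ν, fun a => ?_, fun l hl a => ?_⟩
    · rw [hν' a]
      refine le_min (hc k hk a) ?_
      rw [hcoarse a]
      exact le_measure_preimage_of_le_fiber (hq (k + 1)) hcν _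
    · rcases hl.1.eq_or_lt with rfl | hkl
      · exact (hν' a).trans_le (min_le_left _ _)
      · exact (hν'ν _).trans (hνw l ⟨hkl, by have := hl.2; omega⟩ a)

end Fibers

section WeakLimit

open Filter

variable {X : Type*} [TopologicalSpace X] [CompactSpace X] [TopologicalSpace.MetrizableSpace X]
  [MeasurableSpace X] [BorelSpace X]

theorem exists_isProbabilityMeasure_forall_isOpen_le {ν : ℕ → Measure X}
    (hν : ∀ j, IsFiniteMeasure (ν j)) {c : ℝ≥0∞} (hc : c ≠ 0) (hcν : ∀ j, c ≤ ν j Set.univ) :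
    ∃ μ : Measure X, IsProbabilityMeasure μ ∧
      ∀ (U : Set X) (M : ℝ≥0∞), IsOpen U → (∀ᶠ j in atTop, ν j U ≤ M) → μ U ≤ M / c := by
  let P (j : ℕ) : ProbabilityMeasure X := ⟨(ν j Set.univ)⁻¹ • ν j, ⟨by
    rw [Measure.smul_apply, smul_eq_mul, ENNReal.inv_mul_cancel
      ((pos_iff_ne_zero.2 hc).trans_le (hcν j)).ne' (measure_ne_top _ _)]⟩⟩
  obtain ⟨μ, -, hμ⟩ := isCompact_univ.ultrafilter_le_nhds ((hyperfilter ℕ).map P) (by simp)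
  have hlim : Tendsto P (hyperfilter ℕ) (nhds μ) := hμ
  refine ⟨μ, inferInstance, fun U M hU hM => ?_⟩
  have hP : ∀ᶠ j in (hyperfilter ℕ : Filter ℕ), (P j : Measure X) U ≤ M / c := by
    filter_upwards [Nat.hyperfilter_le_atTop hM] with j hj
    change (ν j Set.univ)⁻¹ * ν j U ≤ M / c
    rw [mul_comm, ← div_eq_mul_inv]
    exact ENNReal.div_le_div hj (hcν j)
  exact (ProbabilityMeasure.le_liminf_measure_open_of_tendsto hlim hU).trans
    (liminf_le_of_frequently_le' hP.frequently)

theorem exists_isProbabilityMeasure_forall_isOpen_le_card_mul {ι : Type*} [Countable ι]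
    [MeasurableSpace ι] [MeasurableSingletonClass ι] {q : ℕ → X → ι} {π : ι → ι}
    (hq : ∀ k, Measurable (q k)) (hπ : ∀ k x, q k x = π (q (k + 1) x))
    (hfin : ∀ k, (Set.range (q k)).Finite) {c : OuterMeasure X} (hc0 : c Set.univ ≠ 0)
    {w : ℕ → ℝ≥0∞} (hw : ∀ k, w k ≠ ∞) {m : ℕ} (hc : ∀ k, m ≤ k → ∀ a, c (q k ⁻¹' {a}) ≤ w k) :
    ∃ μ : Measure X, IsProbabilityMeasure μ ∧ ∀ l, m ≤ l → ∀ (S : Finset ι) (U : Set X),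
      IsOpen U → U ⊆ q l ⁻¹' S → μ U ≤ S.card * w l / c Set.univ := by
  choose ν hν hcν hνw using fun j => exists_isFiniteMeasure_le_fiber_le hq hπ hfin hw hc j m le_rfl
  obtain ⟨μ, hμ, hμU⟩ := exists_isProbabilityMeasure_forall_isOpen_le hν hc0 fun j =>
    le_measure_preimage_of_le_fiber (hq m) (hcν j) Set.univ
  refine ⟨μ, hμ, fun l hl S U hU hUS => hμU U _ hU ?_⟩
  filter_upwards [eventually_ge_atTop (l - m)] with j hj
  calc ν j U ≤ ν j (⋃ a ∈ S, q l ⁻¹' {a}) := by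
        refine measure_mono (hUS.trans_eq ?_)
        ext x
        simp
    _ ≤ ∑ a ∈ S, ν j (q l ⁻¹' {a}) := measure_biUnion_finset_le _ _
    _ ≤ ∑ _a ∈ S, w l := Finset.sum_le_sum fun a _ => hνw j l ⟨hl, by omega⟩ a
    _ = S.card * w l := by rw [Finset.sum_const, nsmul_eq_mul]

end WeakLimit

section DyadicCubes

variable {V ι : Type*} [NormedAddCommGroup V] [InnerProductSpace ℝ V] [Fintype ι]
  (b : OrthonormalBasis ι ℝ V) {k : ℕ} {x y : V}

/-- The index of the dyadic cube of side `2⁻ᵏ` containing `x`, in the coordinates given by the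
orthonormal basis `b`. -/
noncomputable def dyadicIndex (k : ℕ) (x : V) (i : ι) : ℤ :=
  ⌊2 ^ k * ⟪b i, x⟫⌋

theorem dyadicIndex_eq_div (k : ℕ) (x : V) :
    dyadicIndex b k x = fun i => dyadicIndex b (k + 1) x i / 2 := by
  funext i
  have h : (2 : ℝ) ^ k * ⟪b i, x⟫ = 2 ^ (k + 1) * ⟪b i, x⟫ / (2 : ℕ) := by push_cast; ring
  rw [dyadicIndex, h, Int.floor_div_natCast, dyadicIndex, Nat.cast_ofNat]

theorem measurable_dyadicIndex [MeasurableSpace V] [OpensMeasurableSpace V] (k : ℕ) :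
    Measurable (dyadicIndex b k) :=
  measurable_pi_lambda _ fun i => Int.measurable_floor.comp
    (by fun_prop : Continuous fun x => 2 ^ k * ⟪b i, x⟫).measurable

theorem abs_inner_orthonormalBasis_le (i : ι) (x : V) : |⟪b i, x⟫| ≤ ‖x‖ :=
  (abs_real_inner_le_norm _ _).trans_eq (by rw [b.norm_eq_one, one_mul])

theorem finite_image_dyadicIndex (k : ℕ) {A : Set V} (hA : Bornology.IsBounded A) :
    (dyadicIndex b k '' A).Finite := by
  classical
  obtain ⟨R, hR⟩ := hA.exists_norm_le
  refine (Set.finite_Icc (fun _ => ⌊-(2 ^ k * R)⌋) (fun _ => ⌊2 ^ k * R⌋)).subset ?_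
  rintro _ ⟨x, hx, rfl⟩
  have hle i : |2 ^ k * ⟪b i, x⟫| ≤ 2 ^ k * R := by
    rw [abs_mul, abs_of_pos (by positivity)]
    gcongr
    exact (abs_inner_orthonormalBasis_le b i x).trans (hR x hx)
  exact ⟨fun i => Int.floor_mono (neg_le_of_abs_le (hle i)),
    fun i => Int.floor_mono (le_of_abs_le (hle i))⟩

theorem dist_le_of_dyadicIndex_eq (h : dyadicIndex b k x = dyadicIndex b k y) :
    dist x y ≤ √(Fintype.card ι) * (1 / 2) ^ k := by
  have hcoord i : ‖⟪b i, x - y⟫‖ ≤ (1 / 2) ^ k := by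
    have hlt := (Int.abs_sub_lt_one_of_floor_eq_floor (congrFun h i)).le
    rw [← mul_sub, abs_mul, abs_of_pos (by positivity), ← inner_sub_right] at hlt
    rwa [Real.norm_eq_abs, one_div, inv_pow, ← one_div, le_div_iff₀' (by positivity)]
  rw [dist_eq_norm, ← Real.sqrt_sq (by positivity : (0 : ℝ) ≤ (1 / 2) ^ k),
    ← Real.sqrt_mul (Nat.cast_nonneg _)]
  refine Real.le_sqrt_of_sq_le ?_
  calc ‖x - y‖ ^ 2 = ∑ i, ‖⟪b i, x - y⟫‖ ^ 2 := (b.sum_sq_norm_inner_right _).symm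
    _ ≤ ∑ _i : ι, ((1 / 2) ^ k) ^ 2 := by
        gcongr with i
        exact hcoord i
    _ = Fintype.card ι * ((1 / 2) ^ k) ^ 2 := by simp

theorem exists_finset_ball_subset_dyadicIndex_preimage (k : ℕ) (x : V) :
    ∃ S : Finset (ι → ℤ), S.card = 3 ^ Fintype.card ι ∧
      ball x ((1 / 2) ^ k) ⊆ dyadicIndex b k ⁻¹' S := by
  classical
  refine ⟨Fintype.piFinset fun i => Finset.Icc (dyadicIndex b k x i - 1) (dyadicIndex b k x i + 1),
    ?_, fun y hy => ?_⟩
  · have hthree (a : ℤ) : (a + 1 + 1 - (a - 1)).toNat = 3 := by omega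
    simp [Fintype.card_piFinset, Int.card_Icc, hthree]
  · rw [Set.mem_preimage, Finset.mem_coe, Fintype.mem_piFinset]
    intro i
    have hlt : |2 ^ k * ⟪b i, y⟫ - 2 ^ k * ⟪b i, x⟫| < 1 := by
      have h := (abs_inner_orthonormalBasis_le b i (y - x)).trans_lt (mem_ball_iff_norm.1 hy)
      rw [one_div, inv_pow, ← one_div, lt_div_iff₀' (by positivity)] at h
      rwa [← mul_sub, abs_mul, abs_of_pos (by positivity), ← inner_sub_right]
    rw [abs_lt] at hlt
    rw [Finset.mem_Icc, dyadicIndex, dyadicIndex, Int.le_floor, ← Int.lt_add_one_iff, Int.floor_lt]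
    push_cast
    constructor <;> linarith [Int.floor_le (2 ^ k * ⟪b i, x⟫),
      Int.lt_floor_add_one (2 ^ k * ⟪b i, x⟫)]

end DyadicCubes

section FrostmanLemma

variable {V : Type*} [NormedAddCommGroup V] [InnerProductSpace ℝ V] [FiniteDimensional ℝ V]
  [MeasurableSpace V] [BorelSpace V]

theorem exists_forall_ofReal_mul_half_pow_le (a : ℝ) {δ : ℝ≥0∞} (hδ : 0 < δ) :
    ∃ m : ℕ, ∀ k, m ≤ k → ENNReal.ofReal (a * (1 / 2) ^ k) ≤ δ := by
  have h : Filter.Tendsto (fun k : ℕ => ENNReal.ofReal (a * (1 / 2) ^ k)) .atTop (nhds 0) := by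
    simpa using ENNReal.tendsto_ofReal ((tendsto_pow_atTop_nhds_zero_of_lt_one
      (by norm_num : (0 : ℝ) ≤ 1 / 2) (by norm_num)).const_mul a)
  exact Filter.eventually_atTop.1 (h.eventually_le_const hδ)

theorem exists_isProbabilityMeasure_forall_ball_half_pow_le {K : Set V} (hK : IsCompact K)
    {s : ℝ} (hs : 0 ≤ s) (hKs : μH[s] K ≠ 0) :
    ∃ μ : Measure V, IsProbabilityMeasure μ ∧ (∀ᵐ x ∂μ, x ∈ K) ∧ ∃ C ≠ ∞, ∃ m : ℕ,
      ∀ l, m ≤ l → ∀ x, μ (ball x ((1 / 2) ^ l)) ≤ C * ENNReal.ofReal (((1 / 2) ^ l) ^ s) := by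
  have : CompactSpace K := isCompact_iff_compactSpace.1 hK
  have hKs' : μH[s] (Set.univ : Set K) ≠ 0 := by
    rwa [← isometry_subtype_coe.hausdorffMeasure_image (.inl hs), Set.image_univ,
      Subtype.range_coe]
  obtain ⟨c, hc0, δ, hδ, hc⟩ := exists_outerMeasure_le_ediam_rpow hKs'
  set b := stdOrthonormalBasis ℝ V
  set n := Fintype.card (Fin (Module.finrank ℝ V))
  set q : ℕ → K → Fin (Module.finrank ℝ V) → ℤ := fun k => dyadicIndex b k ∘ Subtype.val
  have hdiam k a : ediam (q k ⁻¹' {a}) ≤ ENNReal.ofReal (√n * (1 / 2) ^ k) := by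
    refine ediam_le fun x hx y hy => ?_
    rw [edist_dist]
    exact ENNReal.ofReal_le_ofReal (dist_le_of_dyadicIndex_eq b (hx.trans hy.symm))
  obtain ⟨m, hm⟩ := exists_forall_ofReal_mul_half_pow_le √n hδ
  obtain ⟨μ, hμ, hμU⟩ := exists_isProbabilityMeasure_forall_isOpen_le_card_mul
    (q := q) (π := fun a i => a i / 2) (w := fun k => ENNReal.ofReal (√n * (1 / 2) ^ k) ^ s)
    (fun k => (measurable_dyadicIndex b k).comp measurable_subtype_coe)
    (fun k x => dyadicIndex_eq_div b k x)
    (fun k => by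
      simpa only [q, Set.range_comp, Subtype.range_coe] using
        finite_image_dyadicIndex b k hK.isBounded)
    hc0 (fun k => ENNReal.rpow_ne_top_of_nonneg hs ENNReal.ofReal_ne_top)
    (fun k hk a => (hc _ ((hdiam k a).trans (hm k hk))).trans
      (ENNReal.rpow_le_rpow (hdiam k a) hs))
  refine ⟨μ.map Subtype.val, Measure.isProbabilityMeasure_map (by fun_prop), ?_,
    3 ^ n * ENNReal.ofReal (√n ^ s) / c Set.univ, ?_, m, fun l hl x => ?_⟩
  · exact (ae_map_iff (by fun_prop) hK.measurableSet).2 (Filter.Eventually.of_forall Subtype.prop)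
  · exact ENNReal.div_ne_top (by finiteness) hc0
  · obtain ⟨S, hS, hball⟩ := exists_finset_ball_subset_dyadicIndex_preimage b l x
    rw [Measure.map_apply measurable_subtype_coe measurableSet_ball]
    refine (hμU l hl S _ (isOpen_ball.preimage continuous_subtype_val)
      (Set.preimage_mono hball)).trans_eq ?_
    rw [hS, ENNReal.ofReal_rpow_of_nonneg (by positivity) hs,
      Real.mul_rpow (by positivity) (by positivity), ENNReal.ofReal_mul (by positivity)]
    push_cast
    rw [← mul_assoc, ENNReal.mul_div_right_comm]

theorem exists_isFrostman_of_lt_dimH {K : Set V} (hK : IsCompact K)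
    {s : NNReal} (hs : s < dimH K) :
    ∃ μ : Measure V, IsProbabilityMeasure μ ∧ (∀ᵐ x ∂μ, x ∈ K) ∧ IsFrostman μ s := by
  have hKs : μH[s] K ≠ 0 := by
    rw [hausdorffMeasure_of_lt_dimH hs]
    exact ENNReal.top_ne_zero
  obtain ⟨μ, hμ, hμK, C, hC, m, hball⟩ := exists_isProbabilityMeasure_forall_ball_half_pow_le
    hK s.2 hKs
  exact ⟨μ, hμ, hμK, .of_forall_ball_half_pow_le s.2 hC hball⟩

end FrostmanLemma

section ProductSets

theorem ae_map_prod_mem_image {X Y Z : Type*} [MeasurableSpace X] [MeasurableSpace Y]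
    [MeasurableSpace Z] {μ : Measure X} {ν : Measure Y} {f : X × Y → Z}
    (hf : Measurable f) {A : Set X} {B : Set Y} (hA : ∀ᵐ x ∂μ, x ∈ A) (hB : ∀ᵐ y ∂ν, y ∈ B)
    (hS : MeasurableSet (f '' (A ×ˢ B))) : ∀ᵐ z ∂(μ.prod ν).map f, z ∈ f '' (A ×ˢ B) := by
  refine (ae_map_iff hf.aemeasurable hS).2 ?_
  filter_upwards [Measure.quasiMeasurePreserving_fst.ae hA,
    Measure.quasiMeasurePreserving_snd.ae hB] with p hpA hpB
  exact Set.mem_image_of_mem f ⟨hpA, hpB⟩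

theorem measure_ne_zero_of_ae_mem {X : Type*} [MeasurableSpace X] {τ μ : Measure X} [NeZero τ]
    {s : Set X} (hτ : τ ≪ μ) (hs : ∀ᵐ x ∂τ, x ∈ s) : μ s ≠ 0 := fun h =>
  NeZero.ne τ (Measure.measure_univ_eq_zero.1
    ((measure_congr (Filter.eventuallyEq_univ.2 hs)).symm.trans (hτ h)))

theorem exists_lt_dimH_inter_le_norm {V : Type*} [NormedAddCommGroup V] {E : Set V} {s : ℝ≥0∞}
    (hs : s < dimH E) : ∃ c : ℝ, 0 < c ∧ s < dimH (E ∩ {x | c ≤ ‖x‖}) := by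
  have hsub : E ⊆ {0} ∪ ⋃ n : ℕ, E ∩ {x | 1 / ((n : ℝ) + 1) ≤ ‖x‖} := fun x hx => by
    rcases eq_or_ne x 0 with rfl | hx0
    · exact Or.inl rfl
    · obtain ⟨n, hn⟩ := exists_nat_one_div_lt (norm_pos_iff.2 hx0)
      exact Or.inr (Set.mem_iUnion.2 ⟨n, hx, hn.le⟩)
  have hdim := hs.trans_le (dimH_mono hsub)
  rw [dimH_union, dimH_singleton, dimH_iUnion, max_eq_right zero_le, lt_iSup_iff] at hdim
  obtain ⟨n, hn⟩ := hdim
  exact ⟨_, by positivity, hn⟩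

theorem dimH_le_finrank {V : Type*} [NormedAddCommGroup V] [NormedSpace ℝ V]
    [FiniteDimensional ℝ V] (K : Set V) : dimH K ≤ Module.finrank ℝ V :=
  (dimH_mono (Set.subset_univ K)).trans_eq (Real.dimH_univ_eq_finrank V)

theorem exists_coe_lt_of_two_mul_lt_add {N a b d : ℝ≥0∞} (ha : a ≤ N) (hb : b ≤ N) (hd : d ≤ N)
    (h : 2 * N < a + b + d) :
    ∃ a' b' d' : NNReal, a' < a ∧ b' < b ∧ d' < d ∧ 2 * N < a' + b' + d' := by
  have hpos {x y z : ℝ≥0∞} (hy : y ≤ N) (hz : z ≤ N) (h : 2 * N < x + y + z) : x ≠ 0 := by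
    rintro rfl
    rw [zero_add] at h
    exact h.not_ge ((add_le_add hy hz).trans_eq (two_mul N).symm)
  have ha0 : a ≠ 0 := hpos hb hd h
  have hb0 : b ≠ 0 := hpos ha hd (by rwa [add_comm b])
  have hd0 : d ≠ 0 := hpos ha hb (by rwa [add_assoc, add_comm d])
  obtain ⟨e, he, d', hd', h⟩ := ENNReal.exists_lt_add_of_lt_add h (by simp [ha0]) hd0
  obtain ⟨a', ha', b', hb', he⟩ := ENNReal.exists_lt_add_of_lt_add he ha0 hb0
  lift a' to NNReal using ha'.ne_top
  lift b' to NNReal using hb'.ne_top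
  lift d' to NNReal using hd'.ne_top
  exact ⟨a', b', d', ha', hb', hd', h.trans_le (by gcongr)⟩

variable {V : Type*} [NormedAddCommGroup V] [InnerProductSpace ℝ V] [FiniteDimensional ℝ V]

theorem IsFrostman.volume_image_inner_add_pos [MeasurableSpace V] [BorelSpace V]
    {μ ν κ : Measure V} [IsProbabilityMeasure μ] [IsProbabilityMeasure ν] [IsProbabilityMeasure κ]
    {E F H : Set V} {a b d c : ℝ} (hμ : IsFrostman μ a) (hν : IsFrostman ν b)
    (hκ : IsFrostman κ d) (ha : 0 ≤ a) (hb : 0 ≤ b) (hd : 0 ≤ d)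
    (hsum : 2 * Module.finrank ℝ V < a + b + d) (hE : IsCompact E) (hF : IsCompact F)
    (hH : IsCompact H) (hμE : ∀ᵐ x ∂μ, x ∈ E) (hνF : ∀ᵐ x ∂ν, x ∈ F) (hκH : ∀ᵐ x ∂κ, x ∈ H)
    (hc : 0 < c) (hEc : ∀ x ∈ E, c ≤ ‖x‖) :
    0 < volume ((fun p : V × V => ⟪p.1, p.2⟫) '' (E ×ˢ ((fun p => p.1 + p.2) '' (F ×ˢ H)))) := by
  obtain ⟨ρ, hρ⟩ := ((hE.union hF).union hH).isBounded.exists_norm_le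
  have hFH : IsCompact ((fun p : V × V => p.1 + p.2) '' (F ×ˢ H)) :=
    (hF.prod hH).image continuous_add
  have hT := (hE.prod hFH).image (f := fun p : V × V => ⟪p.1, p.2⟫) (by fun_prop)
  have hac := absolutelyContinuous_of_lintegral_sq_charFun_lt_top
    (hμ.lintegral_sq_charFun_map_inner_conv_lt_top hν hκ ha hb hd hsum hc (hμE.mono hEc)
      (hμE.mono fun x hx => hρ x (.inl (.inl hx))) (hνF.mono fun x hx => hρ x (.inl (.inr hx)))
      (hκH.mono fun x hx => hρ x (.inr hx)))
  have : IsProbabilityMeasure ((μ.prod (Measure.conv ν κ)).map fun p => ⟪p.1, p.2⟫) :=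
    Measure.isProbabilityMeasure_map (by fun_prop)
  have hconv : ∀ᵐ w ∂(Measure.conv ν κ), w ∈ (fun p : V × V => p.1 + p.2) '' (F ×ˢ H) :=
    ae_map_prod_mem_image (by fun_prop) hνF hκH hFH.measurableSet
  exact pos_iff_ne_zero.2 (measure_ne_zero_of_ae_mem hac
    (ae_map_prod_mem_image (by fun_prop) hμE hconv hT.measurableSet))

theorem sum_product_plane_pos_measure_general {E F H : Set V} (hE : IsCompact E)
    (hF : IsCompact F) (hH : IsCompact H)
    (hdim : 2 * (Module.finrank ℝ V : ℝ≥0∞) < dimH E + dimH F + dimH H) :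
    0 < volume {t : ℝ | ∃ x ∈ E, ∃ y ∈ F, ∃ z ∈ H, t = ⟪x, y + z⟫} := by
  borelize V
  obtain ⟨a, b, d, ha, hb, hd, hsum⟩ := exists_coe_lt_of_two_mul_lt_add (dimH_le_finrank E)
    (dimH_le_finrank F) (dimH_le_finrank H) hdim
  obtain ⟨c, hc, hac⟩ := exists_lt_dimH_inter_le_norm ha
  have hEc : IsCompact (E ∩ {x | c ≤ ‖x‖}) :=
    hE.inter_right (isClosed_le continuous_const continuous_norm)
  obtain ⟨μ, _, hμE, hμ⟩ := exists_isFrostman_of_lt_dimH hEc hac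
  obtain ⟨ν, _, hνF, hν⟩ := exists_isFrostman_of_lt_dimH hF hb
  obtain ⟨κ, _, hκH, hκ⟩ := exists_isFrostman_of_lt_dimH hH hd
  refine (hμ.volume_image_inner_add_pos hν hκ a.2 b.2 d.2 (by exact_mod_cast hsum) hEc hF hH
    hμE hνF hκH hc fun x hx => hx.2).trans_le (measure_mono ?_)
  rintro _ ⟨⟨x, _⟩, ⟨hx, ⟨⟨y, z⟩, ⟨hy, hz⟩, rfl⟩⟩, rfl⟩
  exact ⟨x, hx.1, y, hy, z, hz, rfl⟩

end ProductSets

/-- **Continuous sum-product theorem in the plane** (Theorem 1.5 of "Group actions,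
the Mattila integral and applications"). If `E, F, H ⊆ ℝ²` are compact with
`dim_H(E) + dim_H(F) + dim_H(H) > 4`, then the set
`E·(F+H) = { x·(y+z) : x ∈ E, y ∈ F, z ∈ H }` has positive Lebesgue measure. -/
theorem sum_product_plane_pos_measure
    (E F H : Set (EuclideanSpace ℝ (Fin 2)))
    (hE : IsCompact E) (hF : IsCompact F) (hH : IsCompact H)
    (hdim : 4 < dimH E + dimH F + dimH H) :
    0 < volume {t : ℝ | ∃ x ∈ E, ∃ y ∈ F, ∃ z ∈ H, t = ⟪x, y + z⟫} :=
  sum_product_plane_pos_measure_general hE hF hH (by norm_num [hdim])
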